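/- arXiv:1910.10430 — 2 statements merged into one kernel-verified Lean document; each statement's English description precedes it below -/
import Mathlib

section
/- Let 0 < a < 1/4, and set α = −log(cos 2πa) (so α > 0). Then the real-valued function σ ↦ α^{−σ} Γ(σ) P(σ,a) is strictly increasing on the interval (0, ∞). -/
open HurwitzZeta Complex

/-- `P(s,a) = Li_s(e^{2πia}) + Li_s(e^{2πi(1−a)})`. -/
noncomputable def Pf (a : ℝ) : ℂ → ℂ :=
  fun s => expZeta a s + expZeta (1 - a : ℝ) s

/-!
Expanding `w / (e ^ t - w) = ∑ w ^ n e ^ (-nt)` for `w = e ^ (2πia)` and continuing analytically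
gives `Γ(s) Li_s(w) = ∫₀^∞ t ^ (s - 1) w / (e ^ t - w) dt` on `0 < re s`. Adding the conjugate,
`Γ(s) P(s, a)` is the Mellin transform of `k t = 2 (e ^ t cos 2πa - 1) / |e ^ t - w| ^ 2`, which
changes sign exactly once, from negative to positive, at `t = α`. In
`α ^ (-σ) Γ(σ) P(σ, a) = ∫₀^∞ (t / α) ^ σ k t / t dt` the weight `(t / α) ^ σ` decreases in `σ`
where `k < 0` and increases where `k > 0`, so the integrand increases pointwise.
-/

open MeasureTheory Filter Asymptotics Topology Set
open scoped ComplexConjugate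

lemma cpow_sub_one_smul_ofReal (k : ℝ → ℝ) (σ : ℝ) {t : ℝ} (ht : 0 < t) :
    (t : ℂ) ^ ((σ : ℂ) - 1) • (k t : ℂ) = ((t ^ (σ - 1) * k t : ℝ) : ℂ) := by
  rw [smul_eq_mul, ofReal_mul, ofReal_cpow ht.le, ofReal_sub, ofReal_one]

lemma mellinConvergent_ofReal_iff {k : ℝ → ℝ} {σ : ℝ} :
    MellinConvergent (fun t => (k t : ℂ)) σ ↔
      IntegrableOn (fun t => t ^ (σ - 1) * k t) (Ioi 0) :=
  (integrableOn_congr_fun (fun _ ht => cpow_sub_one_smul_ofReal k σ ht) measurableSet_Ioi).trans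
    ⟨fun h => h.re, fun h => h.ofReal⟩

lemma mellin_ofReal (k : ℝ → ℝ) (σ : ℝ) :
    mellin (fun t => (k t : ℂ)) σ = (∫ t in Ioi 0, t ^ (σ - 1) * k t : ℝ) := by
  rw [mellin, setIntegral_congr_fun measurableSet_Ioi
    (fun t ht => cpow_sub_one_smul_ofReal k σ ht), integral_complex_ofReal]

lemma rpow_mul_lt_rpow_mul {x y σ τ : ℝ} (hx : 0 < x) (hx₁ : x ≠ 1) (hy : y ≠ 0)
    (hneg : x < 1 → y ≤ 0) (hpos : 1 < x → 0 ≤ y) (hστ : σ < τ) :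
    x ^ σ * y < x ^ τ * y := by
  rcases hx₁.lt_or_gt with h | h
  · exact mul_lt_mul_of_neg_right (Real.rpow_lt_rpow_of_exponent_gt hx h hστ)
      ((hneg h).lt_of_ne hy)
  · exact mul_lt_mul_of_pos_right (Real.rpow_lt_rpow_of_exponent_lt h hστ)
      ((hpos h).lt_of_ne' hy)

theorem strictMonoOn_rpow_neg_mul_re_mellin {k : ℝ → ℝ} {α : ℝ} {S : Set ℝ} (hα : 0 < α)
    (hconv : ∀ σ ∈ S, MellinConvergent (fun t => (k t : ℂ)) σ)
    (hneg : ∀ t ∈ Ioo 0 α, k t ≤ 0) (hpos : ∀ t ∈ Ioi α, 0 ≤ k t)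
    (hne : ∃ᵐ t ∂volume.restrict (Ioi 0), k t ≠ 0) :
    StrictMonoOn (fun σ : ℝ => α ^ (-σ) * (mellin (fun t => (k t : ℂ)) σ).re) S := by
  intro σ hσ τ hτ hστ
  let f : ℝ → ℝ → ℝ := fun ρ t => α ^ (-ρ) * (t ^ (ρ - 1) * k t)
  have hf_int : ∀ ρ ∈ S, IntegrableOn (f ρ) (Ioi 0) := fun ρ hρ =>
    (mellinConvergent_ofReal_iff.1 (hconv ρ hρ)).const_mul _
  have hf_eq : ∀ ρ, ∀ t ∈ Ioi (0 : ℝ), f ρ t = (t / α) ^ ρ * (k t / t) := fun ρ t ht => by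
    simp only [f]
    rw [Real.div_rpow (mem_Ioi.1 ht).le hα.le, Real.rpow_neg hα.le, Real.rpow_sub_one ht.ne']
    ring
  have hf_lt : ∀ᵐ t ∂volume.restrict (Ioi 0), k t ≠ 0 → f σ t < f τ t := by
    filter_upwards [ae_restrict_mem measurableSet_Ioi,
      ae_restrict_of_ae (Measure.ae_ne volume α)] with t ht htα hkt
    have ht₀ : 0 < t := ht
    rw [hf_eq σ t ht, hf_eq τ t ht]
    refine rpow_mul_lt_rpow_mul (div_pos ht₀ hα) (mt (div_eq_one_iff_eq hα.ne').1 htα)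
      (div_ne_zero hkt ht₀.ne') (fun h => ?_) (fun h => ?_) hστ
    · exact div_nonpos_of_nonpos_of_nonneg (hneg t ⟨ht₀, (div_lt_one hα).1 h⟩) ht₀.le
    · exact div_nonneg (hpos t ((one_lt_div hα).1 h)) ht₀.le
  have hf_le : f σ ≤ᵐ[volume.restrict (Ioi 0)] f τ := by
    filter_upwards [hf_lt] with t ht
    by_cases hkt : k t = 0
    · simp only [f, hkt, mul_zero, le_refl]
    · exact (ht hkt).le
  have hf_ne : ¬ f σ =ᵐ[volume.restrict (Ioi 0)] f τ := fun h_eq => by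
    obtain ⟨t, hkt, hlt, heq⟩ := (hne.and_eventually (hf_lt.and h_eq)).exists
    exact (hlt hkt).ne heq
  have h_int : ∫ t in Ioi 0, f σ t < ∫ t in Ioi 0, f τ t :=
    (integral_mono_ae (hf_int σ hσ) (hf_int τ hτ) hf_le).lt_of_ne
      (mt (integral_eq_iff_of_ae_le (hf_int σ hσ) (hf_int τ hτ) hf_le).1 hf_ne)
  simpa only [mellin_ofReal, ofReal_re, f, integral_const_mul] using h_int

/-- The generating function `∑_{n ≥ 1} wⁿ e^{-nt}` in closed form, the Bose–Einstein integrand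
whose Mellin transform is `Γ(s) Li_s(w)`. -/
noncomputable def polylogKernel (w : ℂ) (t : ℝ) : ℂ :=
  w / (Real.exp t - w)

namespace polylogKernel

variable {w : ℂ} {t : ℝ}

lemma hasSum (hw : ‖w‖ ≤ 1) (ht : 0 < t) :
    HasSum (fun n : ℕ => w ^ (n + 1) * Real.exp (-((n : ℝ) + 1) * t)) (polylogKernel w t) := by
  set r : ℂ := w * Real.exp (-t) with hr
  have hr_norm : ‖r‖ < 1 := by
    rw [hr, norm_mul, norm_real, Real.norm_of_nonneg (Real.exp_pos _).le]
    exact (mul_le_of_le_one_left (Real.exp_pos _).le hw).trans_lt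
      (Real.exp_lt_one_iff.2 (neg_lt_zero.2 ht))
  have h_closed : polylogKernel w t = r * (1 - r)⁻¹ := by
    have h_exp : (Real.exp t : ℂ) ≠ 0 := ofReal_ne_zero.2 (Real.exp_pos t).ne'
    rw [polylogKernel, hr, Real.exp_neg, ofReal_inv, ← div_eq_mul_inv, ← div_eq_mul_inv,
      one_sub_div h_exp, div_div_div_cancel_right₀ h_exp]
  rw [h_closed]
  refine ((hasSum_geometric_of_norm_lt_one hr_norm).mul_left r).congr_fun fun n => ?_
  have h_exp_pow : Real.exp (-((n : ℝ) + 1) * t) = Real.exp (-t) ^ (n + 1) := by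
    rw [← Real.exp_nat_mul]
    push_cast
    ring_nf
  rw [h_exp_pow, ofReal_pow, ← mul_pow, pow_succ']

lemma exp_sub_ne_zero (hw : ‖w‖ ≤ 1) (ht : 0 < t) : (Real.exp t : ℂ) - w ≠ 0 := by
  refine sub_ne_zero.2 fun h => (Real.one_lt_exp_iff.2 ht).not_ge ?_
  rwa [← h, norm_real, Real.norm_of_nonneg (Real.exp_pos t).le] at hw

lemma continuousOn (hw : ‖w‖ ≤ 1) : ContinuousOn (polylogKernel w) (Ioi 0) :=
  continuousOn_const.div (by fun_prop) fun _ ht => exp_sub_ne_zero hw ht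

lemma isBigO_atTop (w : ℂ) : polylogKernel w =O[atTop] fun t => Real.exp (-1 * t) := by
  have h_eq : polylogKernel w =
      fun t => (Real.exp (-1 * t) : ℂ) * (w / (1 - w * Real.exp (-1 * t))) := by
    funext t
    have h_exp : (Real.exp t : ℂ) ≠ 0 := ofReal_ne_zero.2 (Real.exp_pos t).ne'
    rw [polylogKernel, neg_one_mul, Real.exp_neg, ofReal_inv, ← div_eq_mul_inv, one_sub_div h_exp]
    field_simp
  have h_exp : Tendsto (fun t : ℝ => (Real.exp (-1 * t) : ℂ)) atTop (𝓝 0) := by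
    simpa only [neg_one_mul, ofReal_zero, Function.comp_def] using
      (continuous_ofReal.tendsto 0).comp Real.tendsto_exp_neg_atTop_nhds_zero
  have h_lim : Tendsto (fun t : ℝ => w / (1 - w * Real.exp (-1 * t))) atTop
      (𝓝 (w / (1 - w * 0))) :=
    tendsto_const_nhds.div (tendsto_const_nhds.sub (h_exp.const_mul w)) (by simp)
  rw [h_eq]
  simpa only [mul_one] using (isBigO_ofReal_left.2 (isBigO_refl _ _)).mul (h_lim.isBigO_one ℝ)

lemma isBigO_nhdsGT_zero (hw₁ : w ≠ 1) :
    polylogKernel w =O[𝓝[>] 0] fun t : ℝ => t ^ (-(0 : ℝ)) := by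
  have h_cont : ContinuousAt (polylogKernel w) 0 :=
    continuousAt_const.div (by fun_prop) (by simpa [sub_eq_zero] using hw₁.symm)
  simpa only [neg_zero, Real.rpow_zero] using
    (h_cont.tendsto.isBigO_one ℝ).mono nhdsWithin_le_nhds

lemma locallyIntegrableOn (hw : ‖w‖ ≤ 1) : LocallyIntegrableOn (polylogKernel w) (Ioi 0) :=
  (continuousOn hw).locallyIntegrableOn measurableSet_Ioi

lemma mellinConvergent (hw : ‖w‖ ≤ 1) (hw₁ : w ≠ 1) {s : ℂ} (hs : 0 < s.re) :
    MellinConvergent (polylogKernel w) s :=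
  mellinConvergent_of_isBigO_rpow_exp one_pos (locallyIntegrableOn hw) (isBigO_atTop w)
    (isBigO_nhdsGT_zero hw₁) hs

lemma differentiableAt_mellin (hw : ‖w‖ ≤ 1) (hw₁ : w ≠ 1) {s : ℂ} (hs : 0 < s.re) :
    DifferentiableAt ℂ (mellin (polylogKernel w)) s :=
  mellin_differentiableAt_of_isBigO_rpow_exp one_pos (locallyIntegrableOn hw) (isBigO_atTop w)
    (isBigO_nhdsGT_zero hw₁) hs

lemma conj_left (w : ℂ) (t : ℝ) : polylogKernel (conj w) t = conj (polylogKernel w t) := by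
  simp only [polylogKernel, map_div₀, map_sub, conj_ofReal]

lemma re_eq (hw : ‖w‖ = 1) (t : ℝ) :
    (polylogKernel w t).re = (Real.exp t * w.re - 1) / normSq (Real.exp t - w) := by
  have hw_sq : w.re * w.re + w.im * w.im = 1 := by
    rw [← normSq_apply, normSq_eq_norm_sq, hw, one_pow]
  rw [polylogKernel, div_re, ← add_div, sub_re, sub_im, ofReal_re, ofReal_im]
  congr 1
  linear_combination -hw_sq

lemma re_pos_iff (hw : ‖w‖ = 1) (hw_re : 0 < w.re) (ht : 0 < t) :
    0 < (polylogKernel w t).re ↔ -Real.log w.re < t := by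
  rw [re_eq hw, div_pos_iff_of_pos_right (normSq_pos.2 (exp_sub_ne_zero hw.le ht)), sub_pos,
    ← div_lt_iff₀ hw_re, one_div, ← Real.log_lt_iff_lt_exp (inv_pos.2 hw_re), Real.log_inv]

lemma re_neg_iff (hw : ‖w‖ = 1) (hw_re : 0 < w.re) (ht : 0 < t) :
    (polylogKernel w t).re < 0 ↔ t < -Real.log w.re := by
  rw [re_eq hw, div_lt_iff₀ (normSq_pos.2 (exp_sub_ne_zero hw.le ht)), zero_mul, sub_neg,
    ← lt_div_iff₀ hw_re, one_div, ← Real.lt_log_iff_exp_lt (inv_pos.2 hw_re), Real.log_inv]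

lemma frequently_re_ne_zero (hw : ‖w‖ = 1) (hw_re : 0 < w.re) :
    ∃ᵐ t ∂volume.restrict (Ioi 0), (polylogKernel w t).re ≠ 0 := by
  have : (ae (volume.restrict (Ioi (0 : ℝ)))).NeBot := ae_restrict_neBot.2 (by simp)
  refine Eventually.frequently ?_
  filter_upwards [ae_restrict_mem measurableSet_Ioi,
    ae_restrict_of_ae (Measure.ae_ne volume (-Real.log w.re))] with t ht htα
  rcases htα.lt_or_gt with h | h
  · exact ((re_neg_iff hw hw_re ht).2 h).ne
  · exact ((re_pos_iff hw hw_re ht).2 h).ne'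

end polylogKernel

section ExpZeta

variable {a : UnitAddCircle} {s : ℂ}

lemma toCircle_ne_one (ha : a ≠ 0) : (a.toCircle : ℂ) ≠ 1 := by
  rw [Ne, Circle.coe_eq_one, ← AddCircle.toCircle_zero]
  exact (AddCircle.injective_toCircle one_ne_zero).ne ha

lemma hasSum_toCircle_pow_div_cpow (a : UnitAddCircle) (hs : 1 < s.re) :
    HasSum (fun n : ℕ => (a.toCircle : ℂ) ^ (n + 1) / (((n : ℝ) + 1 : ℝ) : ℂ) ^ s)
      (expZeta a s) := by
  induction a using QuotientAddGroup.induction_on with | H x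
  have h_shift := (hasSum_nat_add_iff' 1).2 (hasSum_expZeta_of_one_lt_re x hs)
  simp only [Finset.range_one, Finset.sum_singleton, Nat.cast_zero,
    zero_cpow (ne_zero_of_one_lt_re hs), div_zero, sub_zero] at h_shift
  refine h_shift.congr_fun fun n => ?_
  rw [AddCircle.toCircle_apply_mk, Circle.coe_exp, ← Complex.exp_nat_mul]
  push_cast
  ring_nf

lemma mellin_polylogKernel_of_one_lt_re (a : UnitAddCircle) (hs : 1 < s.re) :
    mellin (polylogKernel a.toCircle) s = Gamma s * expZeta a s := by
  have h_summable : Summable fun n : ℕ => ‖(a.toCircle : ℂ) ^ (n + 1)‖ / ((n : ℝ) + 1) ^ s.re := by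
    simpa only [norm_pow, Circle.norm_coe, one_pow, Nat.cast_add, Nat.cast_one] using
      (summable_nat_add_iff 1).2 (Real.summable_one_div_nat_rpow.2 hs)
  have h_mellin := hasSum_mellin (fun n : ℕ => Or.inr n.cast_add_one_pos) (by linarith)
    (fun t ht => polylogKernel.hasSum (Circle.norm_coe a.toCircle).le ht) h_summable
  refine h_mellin.unique
    (((hasSum_toCircle_pow_div_cpow a hs).mul_left (Gamma s)).congr_fun fun n => ?_)
  rw [mul_div_assoc]

lemma differentiableAt_Gamma_of_re_pos (hs : 0 < s.re) : DifferentiableAt ℂ Gamma s :=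
  differentiableAt_Gamma s fun m hm => hs.not_ge <| by simp [hm]

theorem hasMellin_polylogKernel (ha : a ≠ 0) (hs : 0 < s.re) :
    HasMellin (polylogKernel a.toCircle) s (Gamma s * expZeta a s) := by
  have hw : ‖(a.toCircle : ℂ)‖ ≤ 1 := (Circle.norm_coe _).le
  have hw₁ := toCircle_ne_one ha
  refine ⟨polylogKernel.mellinConvergent hw hw₁ hs, ?_⟩
  have h_open : IsOpen {z : ℂ | 0 < z.re} := isOpen_lt continuous_const continuous_re
  have h_mellin : AnalyticOnNhd ℂ (mellin (polylogKernel a.toCircle)) {z | 0 < z.re} :=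
    DifferentiableOn.analyticOnNhd (fun z hz =>
      (polylogKernel.differentiableAt_mellin hw hw₁ hz).differentiableWithinAt) h_open
  have h_zeta : AnalyticOnNhd ℂ (fun z => Gamma z * expZeta a z) {z | 0 < z.re} :=
    DifferentiableOn.analyticOnNhd (fun z hz => ((differentiableAt_Gamma_of_re_pos hz).mul
      (differentiable_expZeta_of_ne_zero ha z)).differentiableWithinAt) h_open
  have h_near_two : ∀ᶠ z in 𝓝 (2 : ℂ),
      mellin (polylogKernel a.toCircle) z = Gamma z * expZeta a z := by
    filter_upwards [(isOpen_lt continuous_const continuous_re).mem_nhds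
      (show (1 : ℝ) < (2 : ℂ).re by simp)] with z hz
    exact mellin_polylogKernel_of_one_lt_re a hz
  exact h_mellin.eqOn_of_preconnected_of_eventuallyEq h_zeta
    (convex_halfSpace_re_gt 0).isPreconnected (by simp) h_near_two hs

theorem hasMellin_two_mul_re_polylogKernel (ha : a ≠ 0) (hs : 0 < s.re) :
    HasMellin (fun t => ((2 * (polylogKernel a.toCircle t).re : ℝ) : ℂ)) s
      (Gamma s * (expZeta a s + expZeta (-a) s)) := by
  have h_pos := hasMellin_polylogKernel ha hs
  have h_neg := hasMellin_polylogKernel (neg_ne_zero.2 ha) hs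
  have h_add := hasMellin_add h_pos.1 h_neg.1
  rw [h_pos.2, h_neg.2, ← mul_add] at h_add
  simpa only [AddCircle.toCircle_neg, Circle.coe_inv_eq_conj, polylogKernel.conj_left,
    add_conj] using h_add

end ExpZeta

lemma Pf_eq_expZeta_add_expZeta_neg (a : ℝ) (s : ℂ) :
    Pf a s = expZeta a s + expZeta (-(a : UnitAddCircle)) s := by
  rw [Pf, AddCircle.coe_sub, AddCircle.coe_period, zero_sub]

lemma re_toCircle_coe (a : ℝ) :
    (AddCircle.toCircle (a : UnitAddCircle) : ℂ).re = Real.cos (2 * Real.pi * a) := by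
  rw [AddCircle.toCircle_apply_mk, Circle.coe_exp, exp_ofReal_mul_I_re, div_one]

lemma cos_two_pi_mul_mem_Ioo {a : ℝ} (ha₀ : 0 < a) (ha₁ : a < 1 / 4) :
    Real.cos (2 * Real.pi * a) ∈ Ioo 0 1 := by
  have hpi := Real.pi_pos
  refine ⟨Real.cos_pos_of_mem_Ioo ⟨by nlinarith, by nlinarith⟩, ?_⟩
  simpa only [Real.cos_zero] using
    Real.cos_lt_cos_of_nonneg_of_le_pi le_rfl (by nlinarith) (by positivity)

theorem strictMono_weighted_P_general (a : ℝ) (hc₀ : 0 < Real.cos (2 * Real.pi * a))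
    (hc₁ : Real.cos (2 * Real.pi * a) < 1) :
    0 < -Real.log (Real.cos (2 * Real.pi * a)) ∧
    StrictMonoOn
      (fun σ : ℝ =>
        (-Real.log (Real.cos (2 * Real.pi * a))) ^ (-σ) * Real.Gamma σ *
          (Pf a (σ : ℂ)).re)
      (Set.Ioi 0) := by
  rw [← re_toCircle_coe] at hc₀ hc₁ ⊢
  set w : ℂ := (AddCircle.toCircle (a : UnitAddCircle) : ℂ)
  have ha : (a : UnitAddCircle) ≠ 0 := fun h => by simp [w, h] at hc₁
  have hw : ‖w‖ = 1 := Circle.norm_coe _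
  have hα : 0 < -Real.log w.re := neg_pos.2 (Real.log_neg hc₀ hc₁)
  have h_mellin (σ : ℝ) (hσ : σ ∈ Ioi 0) := hasMellin_two_mul_re_polylogKernel ha (s := σ) hσ
  have h_ne : ∃ᵐ t ∂volume.restrict (Ioi 0), 2 * (polylogKernel w t).re ≠ 0 :=
    (polylogKernel.frequently_re_ne_zero hw hc₀).mono fun _ => mul_ne_zero two_ne_zero
  refine ⟨hα, (strictMonoOn_rpow_neg_mul_re_mellin hα (fun σ hσ => (h_mellin σ hσ).1)
    (fun t ht => ?_) (fun t ht => ?_) h_ne).congr fun σ hσ => ?_⟩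
  · have h_neg := (polylogKernel.re_neg_iff hw hc₀ ht.1).2 ht.2
    linarith
  · have h_pos := (polylogKernel.re_pos_iff hw hc₀ (hα.trans ht)).2 ht
    linarith
  · simp only
    rw [(h_mellin σ hσ).2, Pf_eq_expZeta_add_expZeta_neg, Gamma_ofReal, re_ofReal_mul, mul_assoc]

/-- for `0 < a < 1/4` and `α = −log(cos 2πa)` (which is positive), the
real-valued function `σ ↦ α^{−σ} Γ(σ) P(σ,a)` is strictly increasing on `(0,∞)`. -/
theorem strictMono_weighted_P (a : ℝ) (ha₀ : 0 < a) (ha₁ : a < 1 / 4) :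
    0 < -Real.log (Real.cos (2 * Real.pi * a)) ∧
    StrictMonoOn
      (fun σ : ℝ =>
        (-Real.log (Real.cos (2 * Real.pi * a))) ^ (-σ) * Real.Gamma σ *
          (Pf a (σ : ℂ)).re)
      (Set.Ioi 0) := by
  have hc := cos_two_pi_mul_mem_Ioo ha₀ ha₁
  exact strictMono_weighted_P_general a hc.1 hc.2
end

section
/- Fix a real σ > 0. Then the real-valued function a ↦ Z(σ,a) (for σ ≠ 1) has strictly negative derivative with respect to a at every a ∈ (0, 1/2), namely ∂Z(σ,a)/∂a = −σ·Y(σ+1,a) < 0; likewise a ↦ P(σ,a) has strictly negative derivative at every a ∈ (0, 1/2), namely ∂P(σ,a)/∂a = −2π·O(σ−1,a) < 0. In particular both a ↦ Z(σ,a) and a ↦ P(σ,a) are strictly decreasing on (0, 1/2). -/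
open HurwitzZeta Complex

/-- `Z(s,a) = ζ(s,a) + ζ(s,1−a)`. -/
noncomputable def Zf (a : ℝ) : ℂ → ℂ :=
  fun s => hurwitzZeta a s + hurwitzZeta (1 - a : ℝ) s

/-- `Y(s,a) = ζ(s,a) − ζ(s,1−a)`. -/
noncomputable def Yf (a : ℝ) : ℂ → ℂ :=
  fun s => hurwitzZeta a s - hurwitzZeta (1 - a : ℝ) s

/-- `O(s,a) = −i(Li_s(e^{2πia}) − Li_s(e^{2πi(1−a)}))`. -/
noncomputable def Og (a : ℝ) : ℂ → ℂ :=
  fun s => -Complex.I * (expZeta a s - expZeta (1 - a : ℝ) s)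

/-!
Both derivative formulas come from differentiating a Mellin transform under the integral sign.
With `q = e^{2πia - t}`, the Mellin transforms in `t` of `q / (1 - q)` and `q / (1 - q)²` are
`Γ(s) Li_s(e^{2πia})` and `Γ(s) Li_{s-1}(e^{2πia})`, and the second kernel is, up to the factor
`2πi`, the `a`-derivative of the first. Likewise `h_a(t) = e^{-at} / (1 - e^{-t})` satisfies
`∂h_a/∂a = -t h_a`; its pole at `t = 0` does not depend on `a`, so that differences `h_b - h_a`
represent `Γ(s) (ζ(s,b) - ζ(s,a))` in the whole half-plane `Re s > 0`.

The signs come from positivity of the kernels: `h_a - h_{1-a} > 0` for `a < 1/2`, while `O(s-1,a)`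
has kernel `2 Im (q / (1 - q)²)`, which is positive because the Koebe function maps the upper half
of the unit disc into the upper half-plane.
-/

open Set Filter MeasureTheory Topology ComplexConjugate

section MellinTransform

variable {E : Type*} [NormedAddCommGroup E]

theorem isBigO_exp_atTop_of_norm_le {f : ℝ → E} {c M : ℝ}
    (hf : ∀ t > 0, ‖f t‖ ≤ M * Real.exp (-c * t)) :
    f =O[atTop] fun t => Real.exp (-c * t) := by
  refine Asymptotics.IsBigO.of_bound M ?_
  filter_upwards [eventually_gt_atTop 0] with t ht
  simpa only [Real.norm_of_nonneg (Real.exp_pos _).le] using hf t ht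

theorem isBigO_rpow_neg_zero_nhdsGT_of_norm_le_exp {f : ℝ → E} {c M : ℝ}
    (hf : ∀ t > 0, ‖f t‖ ≤ M * Real.exp (-c * t)) :
    f =O[𝓝[>] 0] fun t : ℝ => t ^ (-(0 : ℝ)) := by
  have hle : f =O[𝓝[>] 0] fun t => M * Real.exp (-c * t) := by
    refine Asymptotics.IsBigO.of_bound 1 ?_
    filter_upwards [self_mem_nhdsWithin] with t ht
    simpa only [one_mul, Real.norm_eq_abs] using (hf t ht).trans (le_abs_self _)
  have hcont : Continuous fun t => M * Real.exp (-c * t) := by fun_prop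
  simpa only [neg_zero, Real.rpow_zero] using
    hle.trans ((hcont.tendsto 0).mono_left nhdsWithin_le_nhds |>.isBigO_one ℝ)

variable [NormedSpace ℂ E]

theorem mellinConvergent_of_norm_le_exp {f : ℝ → E} {c M : ℝ} {s : ℂ} (hc : 0 < c)
    (hcont : ContinuousOn f (Ioi 0)) (hf : ∀ t > 0, ‖f t‖ ≤ M * Real.exp (-c * t))
    (hs : 0 < s.re) : MellinConvergent f s :=
  mellinConvergent_of_isBigO_rpow_exp hc (hcont.locallyIntegrableOn measurableSet_Ioi)
    (isBigO_exp_atTop_of_norm_le hf) (isBigO_rpow_neg_zero_nhdsGT_of_norm_le_exp hf) hs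

theorem differentiableAt_mellin_of_norm_le_exp [CompleteSpace E] {f : ℝ → E} {c M : ℝ} {s : ℂ}
    (hc : 0 < c) (hcont : ContinuousOn f (Ioi 0))
    (hf : ∀ t > 0, ‖f t‖ ≤ M * Real.exp (-c * t)) (hs : 0 < s.re) :
    DifferentiableAt ℂ (mellin f) s :=
  mellin_differentiableAt_of_isBigO_rpow_exp hc (hcont.locallyIntegrableOn measurableSet_Ioi)
    (isBigO_exp_atTop_of_norm_le hf) (isBigO_rpow_neg_zero_nhdsGT_of_norm_le_exp hf) hs

theorem hasDerivAt_mellin_of_norm_deriv_le_exp {F F' : ℝ → ℝ → E} {U : Set ℝ} {a c M : ℝ} {s : ℂ}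
    (hc : 0 < c) (hs : 0 < s.re) (hU : U ∈ 𝓝 a) (hF : ∀ b ∈ U, ContinuousOn (F b) (Ioi 0))
    (hFa : MellinConvergent (F a) s) (hF' : ContinuousOn (F' a) (Ioi 0))
    (hderiv : ∀ b ∈ U, ∀ t > 0, HasDerivAt (fun x => F x t) (F' b t) b)
    (hbound : ∀ b ∈ U, ∀ t > 0, ‖F' b t‖ ≤ M * Real.exp (-c * t)) :
    HasDerivAt (fun b => mellin (F b) s) (mellin (F' a) s) a := by
  have hcpow : ContinuousOn (fun t : ℝ => (t : ℂ) ^ (s - 1)) (Ioi 0) := fun t ht =>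
    (continuousAt_ofReal_cpow_const t (s - 1) (Or.inr ht.ne')).continuousWithinAt
  have hdom : IntegrableOn (fun t : ℝ => M * (t ^ (s.re - 1) * Real.exp (-c * t))) (Ioi 0) := by
    have h := integrableOn_rpow_mul_exp_neg_mul_rpow (s := s.re - 1) (by linarith) one_pos hc
    simp only [Real.rpow_one] at h
    exact h.const_mul M
  refine (hasDerivAt_integral_of_dominated_loc_of_deriv_le
    (F := fun b (t : ℝ) => (t : ℂ) ^ (s - 1) • F b t)
    (F' := fun b t => (t : ℂ) ^ (s - 1) • F' b t) hU ?_ hFa ?_ ?_ hdom ?_).2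
  · filter_upwards [hU] with b hb
    exact (hcpow.smul (hF b hb)).aestronglyMeasurable measurableSet_Ioi
  · exact (hcpow.smul hF').aestronglyMeasurable measurableSet_Ioi
  · filter_upwards [ae_restrict_mem measurableSet_Ioi] with t ht b hb
    rw [norm_smul, norm_cpow_eq_rpow_re_of_pos ht, sub_re, one_re]
    calc t ^ (s.re - 1) * ‖F' b t‖ ≤ t ^ (s.re - 1) * (M * Real.exp (-c * t)) := by
          have := Real.rpow_nonneg (le_of_lt ht) (s.re - 1)
          gcongr
          exact hbound b hb t ht
      _ = M * (t ^ (s.re - 1) * Real.exp (-c * t)) := by ring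
  · filter_upwards [ae_restrict_mem measurableSet_Ioi] with t ht b hb
    exact (hderiv b hb t ht).const_smul ((t : ℂ) ^ (s - 1))

theorem eq_of_differentiableOn_of_eq_re_gt [CompleteSpace E] {f g : ℂ → E} {x y : ℝ}
    (hf : DifferentiableOn ℂ f {s | x < s.re}) (hg : DifferentiableOn ℂ g {s | x < s.re})
    (h : ∀ s : ℂ, y < s.re → f s = g s) {s : ℂ} (hs : x < s.re) : f s = g s := by
  have hopen (r : ℝ) : IsOpen {s : ℂ | r < s.re} := isOpen_lt continuous_const continuous_re
  let z : ℂ := (max x y + 1 : ℝ)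
  have hzx : x < z.re := (le_max_left x y).trans_lt (lt_add_one _)
  have hzy : y < z.re := (le_max_right x y).trans_lt (lt_add_one _)
  refine (hf.analyticOnNhd (hopen x)).eqOn_of_preconnected_of_eventuallyEq
    (hg.analyticOnNhd (hopen x)) (convex_halfSpace_re_gt x).isPreconnected hzx ?_ hs
  filter_upwards [(hopen y).mem_nhds hzy] with w hw using h w hw

theorem mellin_eq_Gamma_mul_of_eq_re_gt {f : ℝ → ℂ} {g : ℂ → ℂ} {c M x : ℝ} (hc : 0 < c)
    (hcont : ContinuousOn f (Ioi 0)) (hf : ∀ t > 0, ‖f t‖ ≤ M * Real.exp (-c * t))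
    (hg : DifferentiableOn ℂ g {s | 0 < s.re})
    (h : ∀ s : ℂ, x < s.re → mellin f s = Gamma s * g s) {s : ℂ} (hs : 0 < s.re) :
    mellin f s = Gamma s * g s := by
  have hΓ : DifferentiableOn ℂ Gamma {s | 0 < s.re} := fun z hz =>
    (differentiableAt_Gamma z fun m hm => by
      have : 0 < (-(m : ℂ)).re := hm ▸ hz
      simp only [neg_re, natCast_re] at this
      linarith [m.cast_nonneg (α := ℝ)]).differentiableWithinAt
  exact eq_of_differentiableOn_of_eq_re_gt (g := fun s => Gamma s * g s)
    (fun z hz => (differentiableAt_mellin_of_norm_le_exp hc hcont hf hz).differentiableWithinAt)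
    (hΓ.mul hg) h hs

theorem mellin_eq_Gamma_mul_of_LSeriesHasSum {f : ℕ → ℂ} {F : ℝ → ℂ} {s L : ℂ} (hs : 0 < s.re)
    (hF : ∀ t > 0, HasSum (fun n : ℕ => f (n + 1) * Real.exp (-(n + 1) * t)) (F t))
    (hL : LSeriesHasSum f s L) : mellin F s = Gamma s * L := by
  have hterm (n : ℕ) : LSeries.term f s (n + 1) = f (n + 1) / ((n + 1 : ℝ) : ℂ) ^ s := by
    rw [LSeries.term_of_ne_zero n.succ_ne_zero]
    push_cast
    rfl
  have hsum : HasSum (fun n : ℕ => f (n + 1) / ((n + 1 : ℝ) : ℂ) ^ s) L := by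
    simpa only [hterm, Finset.range_one, Finset.sum_singleton, LSeries.term_zero, sub_zero]
      using (hasSum_nat_add_iff' 1).mpr hL
  refine (hasSum_mellin (fun n => Or.inr (by positivity)) hs hF ?_).unique ?_
  · refine hsum.summable.norm.congr fun n => ?_
    rw [norm_div, norm_cpow_eq_rpow_re_of_pos (by positivity)]
  · simpa only [mul_div_assoc] using hsum.mul_left (Gamma s)

theorem re_mellin_ofReal_pos {f : ℝ → ℝ} {σ : ℝ}
    (hconv : MellinConvergent (fun t => (f t : ℂ)) σ) (hpos : ∀ t > 0, 0 < f t) :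
    0 < (mellin (fun t => (f t : ℂ)) σ).re := by
  have hre : ∀ t ∈ Ioi (0 : ℝ), (t : ℂ) ^ ((σ : ℂ) - 1) • (f t : ℂ) =
      ((t ^ (σ - 1) * f t : ℝ) : ℂ) := fun t ht => by
    push_cast [ofReal_cpow (le_of_lt ht)]
    rfl
  have hint : IntegrableOn (fun t => t ^ (σ - 1) * f t) (Ioi 0) :=
    ((integrableOn_congr_fun hre measurableSet_Ioi).mp hconv).re
  have hpos' : ∀ t ∈ Ioi (0 : ℝ), 0 < t ^ (σ - 1) * f t := fun t ht =>
    mul_pos (Real.rpow_pos_of_pos ht _) (hpos t ht)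
  rw [mellin, setIntegral_congr_fun measurableSet_Ioi hre, integral_complex_ofReal, ofReal_re,
    setIntegral_pos_iff_support_of_nonneg_ae
      (ae_restrict_of_forall_mem measurableSet_Ioi fun t ht => (hpos' t ht).le) hint,
    inter_eq_right.mpr fun t ht => Function.mem_support.mpr (hpos' t ht).ne', Real.volume_Ioi]
  exact ENNReal.zero_lt_top

theorem re_pos_of_mellin_eq_Gamma_mul {f : ℝ → ℝ} {σ : ℝ} {z : ℂ} (hσ : 0 < σ)
    (hconv : MellinConvergent (fun t => (f t : ℂ)) σ) (hpos : ∀ t > 0, 0 < f t)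
    (h : mellin (fun t => (f t : ℂ)) σ = Gamma σ * z) : 0 < z.re := by
  have hmul := re_mellin_ofReal_pos hconv hpos
  rw [h, Gamma_ofReal, re_ofReal_mul] at hmul
  exact pos_of_mul_pos_right hmul (Real.Gamma_pos_of_pos hσ).le

end MellinTransform

section RealValuedDerivative

theorem hasDerivAt_re_of_real_mul {f : ℝ → ℂ} {z : ℂ} {c a : ℝ} (h : HasDerivAt f (c * z) a) :
    HasDerivAt (fun b => (f b).re) (c * z.re) a :=
  (reCLM.hasFDerivAt.comp_hasDerivAt a h).congr_deriv (re_ofReal_mul c z)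

theorem strictAntiOn_of_hasDerivAt_neg {f f' : ℝ → ℝ} {D : Set ℝ} (hD : Convex ℝ D)
    (h : ∀ a ∈ D, HasDerivAt f (f' a) a ∧ f' a < 0) : StrictAntiOn f D :=
  strictAntiOn_of_hasDerivWithinAt_neg hD
    (fun a ha => (h a ha).1.continuousAt.continuousWithinAt)
    (fun a ha => (h a (interior_subset ha)).1.hasDerivWithinAt)
    (fun a ha => (h a (interior_subset ha)).2)

end RealValuedDerivative

section PeriodicZeta

theorem lSeriesHasSum_natCast_mul {f : ℕ → ℂ} {s L : ℂ}
    (h : LSeriesHasSum f (s - 1) L) : LSeriesHasSum (fun n => n * f n) s L := by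
  refine h.congr_fun fun n => ?_
  rcases eq_or_ne n 0 with rfl | hn
  · simp only [LSeries.term_zero]
  · rw [LSeries.term_of_ne_zero hn, LSeries.term_of_ne_zero hn,
      cpow_sub _ _ (Nat.cast_ne_zero.mpr hn), cpow_one, div_div_eq_mul_div, mul_comm]

theorem norm_sub_le_two_mul_norm_sub_smul {E : Type*} [NormedAddCommGroup E] [NormedSpace ℝ E]
    {x y : E} (hxy : ‖x‖ = ‖y‖) {r : ℝ} (hr : r ∈ Icc (0 : ℝ) 1) :
    ‖x - y‖ ≤ 2 * ‖x - r • y‖ := by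
  have hradial : ‖r • y - y‖ = ‖x‖ - ‖r • y‖ := by
    have hsmul : r • y - y = (r - 1) • y := by rw [sub_smul, one_smul]
    rw [hsmul, norm_smul, norm_smul, Real.norm_of_nonneg hr.1,
      Real.norm_of_nonpos (sub_nonpos.mpr hr.2), hxy]
    ring
  calc ‖x - y‖ ≤ ‖x - r • y‖ + ‖r • y - y‖ := norm_sub_le_norm_sub_add_norm_sub _ _ _
    _ = ‖x - r • y‖ + (‖x‖ - ‖r • y‖) := by rw [hradial]
    _ ≤ 2 * ‖x - r • y‖ := by linarith [norm_sub_norm_le x (r • y)]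

/-- The nome `q = e^{2πiτ}` at `τ = a + it/(2π)`. -/
noncomputable def nome (a t : ℝ) : ℂ := exp (2 * Real.pi * I * a - t)

/-- The Bose–Einstein kernel `1 / (e^{t - 2πia} - 1) = ∑_{n ≥ 1} e^{2πina} e^{-nt}`, whose Mellin
transform is the periodic zeta function. -/
noncomputable def boseKernel (a t : ℝ) : ℂ := nome a t / (1 - nome a t)

/-- The Koebe function `q / (1 - q)² = ∑_{n ≥ 1} n qⁿ` at the nome. -/
noncomputable def koebeKernel (a t : ℝ) : ℂ := nome a t / (1 - nome a t) ^ 2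

theorem continuous_nome_left (t : ℝ) : Continuous fun a => nome a t := by
  unfold nome
  fun_prop

theorem continuous_nome (a : ℝ) : Continuous (nome a) := by
  unfold nome
  fun_prop

theorem nome_eq_exp_neg_mul (a t : ℝ) : nome a t = Real.exp (-t) * nome a 0 := by
  rw [nome, nome, ofReal_exp, ← exp_add]
  congr 1
  push_cast
  ring

theorem nome_pow (a t : ℝ) (n : ℕ) :
    nome a t ^ n = exp (2 * Real.pi * I * a * n) * Real.exp (-n * t) := by
  rw [nome, ofReal_exp, ← exp_nat_mul, ← exp_add]
  congr 1
  push_cast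
  ring

theorem norm_nome (a t : ℝ) : ‖nome a t‖ = Real.exp (-t) := by
  simp [nome, norm_exp]

theorem norm_nome_lt_one (a : ℝ) {t : ℝ} (ht : 0 < t) : ‖nome a t‖ < 1 := by
  rw [norm_nome, Real.exp_lt_one_iff]
  exact neg_lt_zero.mpr ht

theorem one_sub_nome_ne_zero (a : ℝ) {t : ℝ} (ht : 0 < t) : 1 - nome a t ≠ 0 :=
  sub_ne_zero.mpr fun h => (norm_nome_lt_one a ht).ne (h ▸ norm_one)

theorem nome_zero_eq_one_iff (a : ℝ) : nome a 0 = 1 ↔ (a : UnitAddCircle) = 0 := by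
  rw [nome, ofReal_zero, sub_zero, exp_eq_one_iff, AddCircle.coe_eq_zero_iff]
  refine exists_congr fun n => ?_
  rw [mul_comm (n : ℂ), mul_right_inj' two_pi_I_ne_zero, zsmul_one, eq_comm]
  norm_cast

theorem norm_one_sub_nome_zero_le (a : ℝ) {t : ℝ} (ht : 0 ≤ t) :
    ‖1 - nome a 0‖ ≤ 2 * ‖1 - nome a t‖ := by
  rw [nome_eq_exp_neg_mul a t, ← real_smul]
  exact norm_sub_le_two_mul_norm_sub_smul (by rw [norm_nome, neg_zero, Real.exp_zero, norm_one])
    ⟨(Real.exp_pos _).le, Real.exp_le_one_iff.mpr (neg_nonpos.mpr ht)⟩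

theorem norm_boseKernel_le {a t m : ℝ} (hm : 0 < m) (ha : m ≤ ‖1 - nome a 0‖) (ht : 0 < t) :
    ‖boseKernel a t‖ ≤ 2 / m * Real.exp (-1 * t) := by
  have hden : m / 2 ≤ ‖1 - nome a t‖ := by linarith [norm_one_sub_nome_zero_le a ht.le]
  rw [boseKernel, norm_div, norm_nome, neg_one_mul]
  calc Real.exp (-t) / ‖1 - nome a t‖ ≤ Real.exp (-t) / (m / 2) := by gcongr
    _ = 2 / m * Real.exp (-t) := by field_simp

theorem norm_koebeKernel_le {a t m : ℝ} (hm : 0 < m) (ha : m ≤ ‖1 - nome a 0‖) (ht : 0 < t) :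
    ‖koebeKernel a t‖ ≤ (2 / m) ^ 2 * Real.exp (-1 * t) := by
  have hden : m / 2 ≤ ‖1 - nome a t‖ := by linarith [norm_one_sub_nome_zero_le a ht.le]
  rw [koebeKernel, norm_div, norm_pow, norm_nome, neg_one_mul]
  calc Real.exp (-t) / ‖1 - nome a t‖ ^ 2 ≤ Real.exp (-t) / (m / 2) ^ 2 := by gcongr
    _ = (2 / m) ^ 2 * Real.exp (-t) := by field_simp

theorem continuousOn_boseKernel (a : ℝ) : ContinuousOn (boseKernel a) (Ioi 0) :=
  (continuous_nome a).continuousOn.div (continuous_const.sub (continuous_nome a)).continuousOn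
    fun _ ht => one_sub_nome_ne_zero a ht

theorem continuousOn_koebeKernel (a : ℝ) : ContinuousOn (koebeKernel a) (Ioi 0) :=
  (continuous_nome a).continuousOn.div
    ((continuous_const.sub (continuous_nome a)).pow 2).continuousOn
    fun _ ht => pow_ne_zero 2 (one_sub_nome_ne_zero a ht)

theorem hasSum_boseKernel (a : ℝ) {t : ℝ} (ht : 0 < t) :
    HasSum (fun n => nome a t ^ (n + 1)) (boseKernel a t) := by
  simpa only [pow_succ', boseKernel, div_eq_mul_inv] using
    (hasSum_geometric_of_norm_lt_one (norm_nome_lt_one a ht)).mul_left (nome a t)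

theorem hasSum_koebeKernel (a : ℝ) {t : ℝ} (ht : 0 < t) :
    HasSum (fun n : ℕ => ((n + 1 : ℕ) : ℂ) * nome a t ^ (n + 1)) (koebeKernel a t) := by
  simpa only [Finset.range_one, Finset.sum_singleton, Nat.cast_zero, zero_mul, sub_zero,
    koebeKernel] using (hasSum_nat_add_iff' (f := fun n : ℕ => (n : ℂ) * nome a t ^ n) 1).mpr
      (hasSum_coe_mul_geometric_of_norm_lt_one (norm_nome_lt_one a ht))

theorem hasDerivAt_boseKernel (a : ℝ) {t : ℝ} (ht : 0 < t) :
    HasDerivAt (fun b => boseKernel b t) (2 * Real.pi * I * koebeKernel a t) a := by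
  have hnome : HasDerivAt (fun b : ℝ => nome b t) (2 * Real.pi * I * nome a t) a := by
    have hlin := ((hasDerivAt_id a).ofReal_comp.const_mul (2 * Real.pi * I)).sub_const (t : ℂ)
    simpa only [nome, mul_comm, one_mul, ofReal_one, id_eq] using hlin.cexp
  have hden := one_sub_nome_ne_zero a ht
  refine (hnome.div (hnome.const_sub 1) hden).congr_deriv ?_
  rw [koebeKernel]
  ring

variable {a : ℝ} {s : ℂ}

theorem norm_one_sub_nome_zero_pos (ha : (a : UnitAddCircle) ≠ 0) : 0 < ‖1 - nome a 0‖ :=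
  norm_pos_iff.mpr <| sub_ne_zero.mpr fun h => ha ((nome_zero_eq_one_iff a).mp h.symm)

theorem mellinConvergent_boseKernel (ha : (a : UnitAddCircle) ≠ 0) (hs : 0 < s.re) :
    MellinConvergent (boseKernel a) s :=
  mellinConvergent_of_norm_le_exp one_pos (continuousOn_boseKernel a)
    (fun _ ht => norm_boseKernel_le (norm_one_sub_nome_zero_pos ha) le_rfl ht) hs

theorem mellinConvergent_koebeKernel (ha : (a : UnitAddCircle) ≠ 0) (hs : 0 < s.re) :
    MellinConvergent (koebeKernel a) s :=
  mellinConvergent_of_norm_le_exp one_pos (continuousOn_koebeKernel a)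
    (fun _ ht => norm_koebeKernel_le (norm_one_sub_nome_zero_pos ha) le_rfl ht) hs

theorem mellin_boseKernel (ha : (a : UnitAddCircle) ≠ 0) (hs : 0 < s.re) :
    mellin (boseKernel a) s = Gamma s * expZeta a s := by
  refine mellin_eq_Gamma_mul_of_eq_re_gt one_pos (continuousOn_boseKernel a)
    (fun t ht => norm_boseKernel_le (norm_one_sub_nome_zero_pos ha) le_rfl ht)
    (differentiable_expZeta_of_ne_zero ha).differentiableOn (fun z (hz : 1 < z.re) => ?_) hs
  refine mellin_eq_Gamma_mul_of_LSeriesHasSum (by linarith) (fun t ht => ?_)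
    (LSeriesHasSum_exp a hz)
  simpa only [nome_pow, Nat.cast_add, Nat.cast_one] using hasSum_boseKernel a ht

theorem mellin_koebeKernel (ha : (a : UnitAddCircle) ≠ 0) (hs : 0 < s.re) :
    mellin (koebeKernel a) s = Gamma s * expZeta a (s - 1) := by
  refine mellin_eq_Gamma_mul_of_eq_re_gt one_pos (continuousOn_koebeKernel a)
    (fun t ht => norm_koebeKernel_le (norm_one_sub_nome_zero_pos ha) le_rfl ht)
    ((differentiable_expZeta_of_ne_zero ha).comp (differentiable_id.sub_const 1)).differentiableOn
    (fun z (hz : 2 < z.re) => ?_) hs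
  have hz' : 1 < (z - 1).re := by simp only [sub_re, one_re]; linarith
  refine mellin_eq_Gamma_mul_of_LSeriesHasSum (by linarith) (fun t ht => ?_)
    (lSeriesHasSum_natCast_mul (LSeriesHasSum_exp a hz'))
  simpa only [nome_pow, Nat.cast_add, Nat.cast_one, mul_assoc] using hasSum_koebeKernel a ht

theorem eventually_lt_norm_one_sub_nome_zero {m : ℝ} (hm : m < ‖1 - nome a 0‖) :
    ∀ᶠ b in 𝓝 a, m < ‖1 - nome b 0‖ :=
  ((continuous_const.sub (continuous_nome_left 0)).norm.tendsto a).eventually_const_lt hm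

theorem hasDerivAt_mellin_boseKernel (ha : (a : UnitAddCircle) ≠ 0) (hs : 0 < s.re) :
    HasDerivAt (fun b => mellin (boseKernel b) s)
      (2 * Real.pi * I * mellin (koebeKernel a) s) a := by
  have hpos := norm_one_sub_nome_zero_pos ha
  rw [← smul_eq_mul, ← mellin_const_smul]
  refine hasDerivAt_mellin_of_norm_deriv_le_exp
    (F' := fun b t => (2 * Real.pi * I) • koebeKernel b t)
    (M := ‖(2 * Real.pi * I : ℂ)‖ * (2 / (‖1 - nome a 0‖ / 2)) ^ 2) one_pos hs
    (eventually_lt_norm_one_sub_nome_zero (half_lt_self hpos))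
    (fun b _ => continuousOn_boseKernel b) (mellinConvergent_boseKernel ha hs)
    ((continuousOn_koebeKernel a).const_smul (2 * Real.pi * I : ℂ))
    (fun b _ t ht => hasDerivAt_boseKernel b ht) fun b hb t ht => ?_
  rw [norm_smul, mul_assoc ‖_‖]
  gcongr
  exact norm_koebeKernel_le (half_pos hpos) (le_of_lt hb) ht

theorem hasDerivAt_expZeta (ha : (a : UnitAddCircle) ≠ 0) (hs : 0 < s.re) :
    HasDerivAt (fun b : ℝ => expZeta b s) (2 * Real.pi * I * expZeta a (s - 1)) a := by
  have hΓ : Gamma s ≠ 0 := Gamma_ne_zero_of_re_pos hs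
  have heq : (fun b : ℝ => expZeta b s) =ᶠ[𝓝 a] fun b => (Gamma s)⁻¹ * mellin (boseKernel b) s := by
    filter_upwards [eventually_lt_norm_one_sub_nome_zero (norm_one_sub_nome_zero_pos ha)] with b hb
    have hb' : (b : UnitAddCircle) ≠ 0 := fun h => by
      rw [(nome_zero_eq_one_iff b).mpr h, sub_self, norm_zero] at hb
      exact hb.false
    rw [mellin_boseKernel hb' hs, inv_mul_cancel_left₀ hΓ]
  refine (((hasDerivAt_mellin_boseKernel ha hs).const_mul (Gamma s)⁻¹).congr_of_eventuallyEq
    heq).congr_deriv ?_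
  rw [mellin_koebeKernel ha hs, mul_left_comm, inv_mul_cancel_left₀ hΓ]

theorem coe_one_sub_ne_zero (ha : (a : UnitAddCircle) ≠ 0) :
    ((1 - a : ℝ) : UnitAddCircle) ≠ 0 := by
  rwa [AddCircle.coe_sub, AddCircle.coe_period, zero_sub, neg_ne_zero]

theorem nome_one_sub (a t : ℝ) : nome (1 - a) t = conj (nome a t) := by
  rw [nome, nome, ← exp_conj, ← exp_periodic (conj _)]
  congr 1
  simp only [map_sub, map_mul, map_ofNat, conj_ofReal, conj_I]
  push_cast
  ring

theorem koebeKernel_one_sub (a t : ℝ) : koebeKernel (1 - a) t = conj (koebeKernel a t) := by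
  simp only [koebeKernel, nome_one_sub, map_div₀, map_pow, map_sub, map_one]

theorem im_nome (a t : ℝ) : (nome a t).im = Real.exp (-t) * Real.sin (2 * Real.pi * a) := by
  simp [nome, exp_im]

theorem im_div_one_sub_sq_pos {w : ℂ} (hw : ‖w‖ < 1) (him : 0 < w.im) :
    0 < (w / (1 - w) ^ 2).im := by
  have hne : 1 - w ≠ 0 := sub_ne_zero.mpr fun h => hw.ne (h ▸ norm_one)
  have hnum : (w * conj ((1 - w) ^ 2)).im = w.im * (1 - normSq w) := by
    simp only [pow_two, mul_im, mul_re, conj_im, conj_re, sub_im, sub_re, one_im, one_re,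
      normSq_apply]
    ring
  rw [div_eq_mul_inv, inv_def, ← mul_assoc, im_mul_ofReal, hnum, normSq_eq_norm_sq w]
  have : 0 < 1 - ‖w‖ ^ 2 := by nlinarith [norm_nonneg w]
  have : 0 < normSq ((1 - w) ^ 2) := normSq_pos.mpr (pow_ne_zero 2 hne)
  positivity

theorem im_koebeKernel_pos (ha : a ∈ Ioo (0 : ℝ) (1 / 2)) {t : ℝ} (ht : 0 < t) :
    0 < (koebeKernel a t).im := by
  refine im_div_one_sub_sq_pos (norm_nome_lt_one a ht) ?_
  rw [im_nome]
  refine mul_pos (Real.exp_pos _) (Real.sin_pos_of_pos_of_lt_pi ?_ ?_) <;>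
    nlinarith [Real.pi_pos, ha.1, ha.2]

theorem hasMellin_two_mul_im_koebeKernel (ha : (a : UnitAddCircle) ≠ 0) (hs : 0 < s.re) :
    HasMellin (fun t => ((2 * (koebeKernel a t).im : ℝ) : ℂ)) s (Gamma s * Og a (s - 1)) := by
  have ha' := coe_one_sub_ne_zero ha
  have hsub := (hasMellin_sub (mellinConvergent_koebeKernel ha hs)
    (mellinConvergent_koebeKernel ha' hs))
  have hker : (fun t => ((2 * (koebeKernel a t).im : ℝ) : ℂ)) =
      fun t => -I • (koebeKernel a t - koebeKernel (1 - a) t) := by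
    funext t
    rw [koebeKernel_one_sub, sub_conj, smul_eq_mul]
    push_cast
    linear_combination 2 * ((koebeKernel a t).im : ℂ) * I_mul_I
  rw [hker]
  refine ⟨hsub.1.const_smul _, ?_⟩
  rw [mellin_const_smul, hsub.2, mellin_koebeKernel ha hs, mellin_koebeKernel ha' hs, smul_eq_mul,
    Og]
  ring

theorem hasDerivAt_Pf (ha : (a : UnitAddCircle) ≠ 0) (hs : 0 < s.re) :
    HasDerivAt (fun b : ℝ => Pf b s) (-(2 * Real.pi) * Og a (s - 1)) a := by
  have hrefl := (hasDerivAt_expZeta (coe_one_sub_ne_zero ha) hs).comp_const_sub 1 a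
  refine ((hasDerivAt_expZeta ha hs).add hrefl).congr_deriv ?_
  rw [Og]
  ring

theorem hasDerivAt_re_Pf {σ : ℝ} (hσ : 0 < σ) (ha : (a : UnitAddCircle) ≠ 0) :
    HasDerivAt (fun b : ℝ => (Pf b σ).re) (-(2 * Real.pi) * (Og a (σ - 1)).re) a :=
  hasDerivAt_re_of_real_mul (by exact_mod_cast hasDerivAt_Pf (s := σ) ha hσ)

theorem coe_ne_zero_of_mem_Ioo (ha : a ∈ Ioo (0 : ℝ) 1) : (a : UnitAddCircle) ≠ 0 :=
  (AddCircle.coe_eq_zero_iff_of_mem_Ico ⟨ha.1.le, ha.2⟩).not.mpr ha.1.ne'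

theorem re_Og_sub_one_pos {σ : ℝ} (hσ : 0 < σ) (ha : a ∈ Ioo (0 : ℝ) (1 / 2)) :
    0 < (Og a (σ - 1)).re := by
  obtain ⟨hconv, heq⟩ := hasMellin_two_mul_im_koebeKernel (s := σ)
    (coe_ne_zero_of_mem_Ioo ⟨ha.1, by linarith [ha.2]⟩) hσ
  exact re_pos_of_mellin_eq_Gamma_mul hσ hconv
    (fun t ht => mul_pos two_pos (im_koebeKernel_pos ha ht)) heq

end PeriodicZeta

section HurwitzZeta

/-- The kernel `e^{-at} / (1 - e^{-t}) = ∑_{n ≥ 0} e^{-(n+a)t}`, whose Mellin transform is the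
Hurwitz zeta function. It has a simple pole at `t = 0` with residue independent of `a`. -/
noncomputable def hurwitzKernel (a t : ℝ) : ℝ := Real.exp (-a * t) / (1 - Real.exp (-t))

theorem one_sub_exp_neg_pos {t : ℝ} (ht : 0 < t) : 0 < 1 - Real.exp (-t) :=
  sub_pos.mpr (Real.exp_lt_one_iff.mpr (neg_lt_zero.mpr ht))

theorem div_one_sub_exp_neg_le {t : ℝ} (ht : 0 < t) : t / (1 - Real.exp (-t)) ≤ 1 + t := by
  rw [div_le_iff₀ (one_sub_exp_neg_pos ht)]
  have h : (1 + t) * Real.exp (-t) ≤ Real.exp t * Real.exp (-t) := by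
    gcongr
    linarith [Real.add_one_le_exp t]
  rw [← Real.exp_add, add_neg_cancel, Real.exp_zero] at h
  linarith

theorem one_add_le_mul_exp {c t : ℝ} (hc : 0 < c) (ht : 0 ≤ t) :
    1 + t ≤ (1 + c⁻¹) * Real.exp (c * t) := by
  have hexp : c * t + 1 ≤ Real.exp (c * t) := Real.add_one_le_exp _
  calc 1 + t ≤ (1 + c⁻¹) * (c * t + 1) := by
        have : 0 ≤ c * t + c⁻¹ := by positivity
        linarith [inv_mul_cancel_left₀ hc.ne' t]
    _ ≤ (1 + c⁻¹) * Real.exp (c * t) := by gcongr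

theorem hurwitzKernel_pos (a : ℝ) {t : ℝ} (ht : 0 < t) : 0 < hurwitzKernel a t :=
  div_pos (Real.exp_pos _) (one_sub_exp_neg_pos ht)

theorem hurwitzKernel_lt_of_lt {a b t : ℝ} (hab : a < b) (ht : 0 < t) :
    hurwitzKernel b t < hurwitzKernel a t := by
  have := one_sub_exp_neg_pos ht
  unfold hurwitzKernel
  gcongr

theorem mul_hurwitzKernel_le {a m t : ℝ} (hm : 0 < m) (ha : m ≤ a) (ht : 0 < t) :
    t * hurwitzKernel a t ≤ (1 + (m / 2)⁻¹) * Real.exp (-(m / 2) * t) := by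
  calc t * hurwitzKernel a t = t / (1 - Real.exp (-t)) * Real.exp (-a * t) := by
        rw [hurwitzKernel]; ring
    _ ≤ (1 + (m / 2)⁻¹) * Real.exp (m / 2 * t) * Real.exp (-m * t) := by
        gcongr
        exact (div_one_sub_exp_neg_le ht).trans (one_add_le_mul_exp (half_pos hm) ht.le)
    _ = (1 + (m / 2)⁻¹) * Real.exp (-(m / 2) * t) := by
        rw [mul_assoc, ← Real.exp_add]
        ring_nf

theorem norm_mul_hurwitzKernel_le {a m t : ℝ} (hm : 0 < m) (ha : m ≤ a) (ht : 0 < t) :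
    ‖((t * hurwitzKernel a t : ℝ) : ℂ)‖ ≤ (1 + (m / 2)⁻¹) * Real.exp (-(m / 2) * t) := by
  rw [norm_real, Real.norm_of_nonneg (mul_pos ht (hurwitzKernel_pos a ht)).le]
  exact mul_hurwitzKernel_le hm ha ht

theorem hasDerivAt_hurwitzKernel (a t : ℝ) :
    HasDerivAt (fun b => hurwitzKernel b t) (-(t * hurwitzKernel a t)) a := by
  refine (((hasDerivAt_neg a).mul_const t).exp.div_const (1 - Real.exp (-t))).congr_deriv ?_
  rw [hurwitzKernel]
  ring

theorem abs_hurwitzKernel_sub_le {a b m t : ℝ} (hm : 0 < m) (ha : m ≤ a) (hb : m ≤ b)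
    (ht : 0 < t) :
    |hurwitzKernel b t - hurwitzKernel a t| ≤
      (1 + (m / 2)⁻¹) * |b - a| * Real.exp (-(m / 2) * t) := by
  rw [mul_right_comm]
  refine (convex_Ici m).norm_image_sub_le_of_norm_hasDerivWithin_le
    (fun x _ => (hasDerivAt_hurwitzKernel x t).hasDerivWithinAt) (fun x hx => ?_) ha hb
  rw [norm_neg, Real.norm_of_nonneg (mul_pos ht (hurwitzKernel_pos x ht)).le]
  exact mul_hurwitzKernel_le hm hx ht

theorem continuousOn_hurwitzKernel (a : ℝ) : ContinuousOn (hurwitzKernel a) (Ioi 0) :=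
  ContinuousOn.div (by fun_prop) (by fun_prop) fun _ ht => (one_sub_exp_neg_pos ht).ne'

theorem hasSum_hurwitzKernel (a : ℝ) {t : ℝ} (ht : 0 < t) :
    HasSum (fun n : ℕ => Real.exp (-(n + a) * t)) (hurwitzKernel a t) := by
  have hgeom := (hasSum_geometric_of_lt_one (Real.exp_pos (-t)).le
    (Real.exp_lt_one_iff.mpr (neg_lt_zero.mpr ht))).mul_left (Real.exp (-a * t))
  refine hgeom.congr_fun fun n => ?_
  rw [← Real.exp_nat_mul, ← Real.exp_add]
  ring_nf

variable {a b : ℝ} {s : ℂ}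

theorem mellinConvergent_mul_hurwitzKernel (ha : 0 < a) (hs : 0 < s.re) :
    MellinConvergent (fun t => ((t * hurwitzKernel a t : ℝ) : ℂ)) s :=
  mellinConvergent_of_norm_le_exp (half_pos ha)
    (continuous_ofReal.comp_continuousOn (continuousOn_id.mul (continuousOn_hurwitzKernel a)))
    (fun _ ht => norm_mul_hurwitzKernel_le ha le_rfl ht) hs

theorem mellinConvergent_hurwitzKernel (ha : 0 < a) (hs : 1 < s.re) :
    MellinConvergent (fun t => (hurwitzKernel a t : ℂ)) s := by
  have hs' : 0 < (s - 1).re := by simpa only [sub_re, one_re, sub_pos] using hs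
  rw [← sub_add_cancel s 1, ← MellinConvergent.cpow_smul]
  simpa only [cpow_one, smul_eq_mul, ofReal_mul] using mellinConvergent_mul_hurwitzKernel ha hs'

theorem mellin_hurwitzKernel (ha : a ∈ Ioc (0 : ℝ) 1) (hs : 1 < s.re) :
    mellin (fun t => (hurwitzKernel a t : ℂ)) s = Gamma s * hurwitzZeta a s := by
  have hpos (n : ℕ) : 0 < n + a := add_pos_of_nonneg_of_pos n.cast_nonneg ha.1
  have hsum := hasSum_hurwitzZeta_of_one_lt_re ⟨ha.1.le, ha.2⟩ hs
  refine (hasSum_mellin (a := fun _ : ℕ => 1) (fun n => Or.inr (hpos n)) (by linarith)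
    (fun t ht => ?_) ?_).unique ?_
  · simpa only [one_mul] using hasSum_ofReal.mpr (hasSum_hurwitzKernel a ht)
  · refine hsum.summable.norm.congr fun n => ?_
    rw [norm_div, ← norm_cpow_eq_rpow_re_of_pos (hpos n)]
    push_cast
    rfl
  · simpa only [mul_div_assoc, ofReal_add, ofReal_natCast] using hsum.mul_left (Gamma s)

theorem mellin_mul_hurwitzKernel (ha : a ∈ Ioc (0 : ℝ) 1) (hs : 0 < s.re) :
    mellin (fun t => ((t * hurwitzKernel a t : ℝ) : ℂ)) s =
      Gamma (s + 1) * hurwitzZeta a (s + 1) := by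
  have hs' : 1 < (s + 1).re := by simpa only [add_re, one_re, lt_add_iff_pos_left] using hs
  rw [← mellin_hurwitzKernel ha hs', ← mellin_cpow_smul]
  simp only [cpow_one, smul_eq_mul, ofReal_mul]

theorem hasMellin_hurwitzKernel_sub (ha : a ∈ Ioc (0 : ℝ) 1) (hb : b ∈ Ioc (0 : ℝ) 1)
    (hs : 0 < s.re) :
    HasMellin (fun t => ((hurwitzKernel b t - hurwitzKernel a t : ℝ) : ℂ)) s
      (Gamma s * (hurwitzZeta b s - hurwitzZeta a s)) := by
  have hm : 0 < min a b := lt_min ha.1 hb.1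
  have hcont : ContinuousOn (fun t => ((hurwitzKernel b t - hurwitzKernel a t : ℝ) : ℂ)) (Ioi 0) :=
    continuous_ofReal.comp_continuousOn
      ((continuousOn_hurwitzKernel b).sub (continuousOn_hurwitzKernel a))
  have hbound (t : ℝ) (ht : 0 < t) : ‖((hurwitzKernel b t - hurwitzKernel a t : ℝ) : ℂ)‖ ≤
      (1 + (min a b / 2)⁻¹) * |b - a| * Real.exp (-(min a b / 2) * t) := by
    rw [norm_real]
    exact abs_hurwitzKernel_sub_le hm (min_le_left a b) (min_le_right a b) ht
  refine ⟨mellinConvergent_of_norm_le_exp (half_pos hm) hcont hbound hs, ?_⟩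
  refine mellin_eq_Gamma_mul_of_eq_re_gt (g := fun z => hurwitzZeta b z - hurwitzZeta a z)
    (half_pos hm) hcont hbound
    (differentiable_hurwitzZeta_sub_hurwitzZeta b a).differentiableOn
    (fun z (hz : 1 < z.re) => ?_) hs
  have hsub := (hasMellin_sub (mellinConvergent_hurwitzKernel hb.1 hz)
    (mellinConvergent_hurwitzKernel ha.1 hz)).2
  simpa only [ofReal_sub, mellin_hurwitzKernel ha hz, mellin_hurwitzKernel hb hz, mul_sub]
    using hsub

theorem hasDerivAt_mellin_hurwitzKernel_sub (ha : 0 < a) (hs : 0 < s.re) :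
    HasDerivAt (fun b => mellin (fun t => ((hurwitzKernel b t - hurwitzKernel a t : ℝ) : ℂ)) s)
      (-mellin (fun t => ((t * hurwitzKernel a t : ℝ) : ℂ)) s) a := by
  have hcont (b : ℝ) := continuousOn_hurwitzKernel b
  rw [← neg_one_smul ℂ, ← mellin_const_smul]
  refine hasDerivAt_mellin_of_norm_deriv_le_exp
    (F' := fun b t => (-1 : ℂ) • ((t * hurwitzKernel b t : ℝ) : ℂ))
    (half_pos (half_pos ha)) hs (Ici_mem_nhds (half_lt_self ha)) (fun b _ => ?_) ?_ ?_
    (M := 1 + (a / 2 / 2)⁻¹) (fun b _ t _ => ?_) (fun b hb t ht => ?_)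
  · exact continuous_ofReal.comp_continuousOn ((hcont b).sub (hcont a))
  · simp only [sub_self, ofReal_zero, MellinConvergent, smul_zero, integrableOn_zero]
  · exact (continuous_ofReal.comp_continuousOn (continuousOn_id.mul (hcont a))).const_smul (-1 : ℂ)
  · refine ((hasDerivAt_hurwitzKernel b t).sub_const _).ofReal_comp.congr_deriv ?_
    rw [neg_one_smul, ofReal_neg]
  · rw [neg_one_smul, norm_neg]
    exact norm_mul_hurwitzKernel_le (half_pos ha) hb ht

theorem hasDerivAt_hurwitzZeta (ha : a ∈ Ioo (0 : ℝ) 1) (hs : 0 < s.re) :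
    HasDerivAt (fun b : ℝ => hurwitzZeta b s) (-s * hurwitzZeta a (s + 1)) a := by
  have hΓ : Gamma s ≠ 0 := Gamma_ne_zero_of_re_pos hs
  have ha' : a ∈ Ioc (0 : ℝ) 1 := Ioo_subset_Ioc_self ha
  have heq : (fun b : ℝ => hurwitzZeta b s) =ᶠ[𝓝 a] fun b => hurwitzZeta a s +
      (Gamma s)⁻¹ * mellin (fun t => ((hurwitzKernel b t - hurwitzKernel a t : ℝ) : ℂ)) s := by
    filter_upwards [Ioo_mem_nhds ha.1 ha.2] with b hb
    rw [(hasMellin_hurwitzKernel_sub ha' (Ioo_subset_Ioc_self hb) hs).2,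
      inv_mul_cancel_left₀ hΓ, add_sub_cancel]
  refine ((((hasDerivAt_mellin_hurwitzKernel_sub ha.1 hs).const_mul (Gamma s)⁻¹).const_add
    (hurwitzZeta a s)).congr_of_eventuallyEq heq).congr_deriv ?_
  rw [mellin_mul_hurwitzKernel ha' hs, Gamma_add_one s (ne_zero_of_re_pos hs)]
  field_simp

theorem re_hurwitzZeta_sub_pos {σ : ℝ} (hσ : 0 < σ) (ha : 0 < a) (hab : a < b) (hb : b ≤ 1) :
    0 < (hurwitzZeta a σ - hurwitzZeta b σ).re := by
  obtain ⟨hconv, heq⟩ := hasMellin_hurwitzKernel_sub (s := σ) ⟨ha.trans hab, hb⟩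
    ⟨ha, hab.le.trans hb⟩ hσ
  exact re_pos_of_mellin_eq_Gamma_mul hσ hconv
    (fun t ht => sub_pos.mpr (hurwitzKernel_lt_of_lt hab ht)) heq

theorem hasDerivAt_Zf (ha : a ∈ Ioo (0 : ℝ) 1) (hs : 0 < s.re) :
    HasDerivAt (fun b : ℝ => Zf b s) (-s * Yf a (s + 1)) a := by
  have ha' : 1 - a ∈ Ioo (0 : ℝ) 1 := ⟨sub_pos.mpr ha.2, sub_lt_self 1 ha.1⟩
  refine ((hasDerivAt_hurwitzZeta ha hs).add
    ((hasDerivAt_hurwitzZeta ha' hs).comp_const_sub 1 a)).congr_deriv ?_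
  rw [Yf]
  ring

theorem hasDerivAt_re_Zf {σ : ℝ} (hσ : 0 < σ) (ha : a ∈ Ioo (0 : ℝ) 1) :
    HasDerivAt (fun b : ℝ => (Zf b σ).re) (-σ * (Yf a (σ + 1)).re) a :=
  hasDerivAt_re_of_real_mul (by exact_mod_cast hasDerivAt_Zf (s := σ) ha hσ)

theorem re_Yf_pos {σ : ℝ} (hσ : 0 < σ) (ha : a ∈ Ioo (0 : ℝ) (1 / 2)) : 0 < (Yf a σ).re :=
  re_hurwitzZeta_sub_pos hσ ha.1 (by linarith [ha.2]) (by linarith [ha.1])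

end HurwitzZeta

/-- for fixed `σ > 0`, the map `a ↦ Z(σ,a)` (for `σ ≠ 1`) has derivative
`−σ·Y(σ+1,a) < 0` at each `a ∈ (0,1/2)`, and `a ↦ P(σ,a)` has derivative
`−2π·O(σ−1,a) < 0` there; in particular both maps are strictly decreasing on `(0,1/2)`. -/
theorem Z_P_strictAnti_in_a (σ : ℝ) (hσ : 0 < σ) :
    (σ ≠ 1 → ∀ a ∈ Set.Ioo (0 : ℝ) (1 / 2),
      HasDerivAt (fun b : ℝ => (Zf b (σ : ℂ)).re) (-σ * (Yf a ((σ : ℂ) + 1)).re) a ∧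
      -σ * (Yf a ((σ : ℂ) + 1)).re < 0) ∧
    (∀ a ∈ Set.Ioo (0 : ℝ) (1 / 2),
      HasDerivAt (fun b : ℝ => (Pf b (σ : ℂ)).re)
        (-(2 * Real.pi) * (Og a ((σ : ℂ) - 1)).re) a ∧
      -(2 * Real.pi) * (Og a ((σ : ℂ) - 1)).re < 0) ∧
    (σ ≠ 1 → StrictAntiOn (fun a : ℝ => (Zf a (σ : ℂ)).re) (Set.Ioo 0 (1 / 2))) ∧
    StrictAntiOn (fun a : ℝ => (Pf a (σ : ℂ)).re) (Set.Ioo 0 (1 / 2)) := by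
  have hIoo : Ioo (0 : ℝ) (1 / 2) ⊆ Ioo 0 1 := Ioo_subset_Ioo_right (by norm_num)
  have hZ (a : ℝ) (ha : a ∈ Ioo (0 : ℝ) (1 / 2)) :
      HasDerivAt (fun b : ℝ => (Zf b σ).re) (-σ * (Yf a (σ + 1)).re) a ∧
        -σ * (Yf a (σ + 1)).re < 0 :=
    ⟨hasDerivAt_re_Zf hσ (hIoo ha), mul_neg_of_neg_of_pos (neg_lt_zero.mpr hσ)
      (by exact_mod_cast re_Yf_pos (add_pos hσ one_pos) ha)⟩
  have hP (a : ℝ) (ha : a ∈ Ioo (0 : ℝ) (1 / 2)) :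
      HasDerivAt (fun b : ℝ => (Pf b σ).re) (-(2 * Real.pi) * (Og a (σ - 1)).re) a ∧
        -(2 * Real.pi) * (Og a (σ - 1)).re < 0 :=
    ⟨hasDerivAt_re_Pf hσ (coe_ne_zero_of_mem_Ioo (hIoo ha)),
      mul_neg_of_neg_of_pos (neg_lt_zero.mpr Real.two_pi_pos) (re_Og_sub_one_pos hσ ha)⟩
  exact ⟨fun _ => hZ, hP, fun _ => strictAntiOn_of_hasDerivAt_neg (convex_Ioo 0 (1 / 2)) hZ,
    strictAntiOn_of_hasDerivAt_neg (convex_Ioo 0 (1 / 2)) hP⟩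
end
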